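/- arXiv:2112.02928 — 2 statements merged into one kernel-verified Lean document; each statement's English description precedes it below -/
import Mathlib

section
/- Let p > 0, ν ∈ ℂ, x > 0, and let c > max(0, −Re(ν)). Then Krätzel's integral admits the Mellin–Barnes representation F_{p,ν}(x) = (1/(2πi p)) ∫_{c−i∞}^{c+i∞} Γ(s) Γ((s+ν)/p) x^{−s} ds, i.e. F_{p,ν}(x) = (1/(2π p)) ∫_{−∞}^{∞} Γ(c+it) Γ((c+it+ν)/p) x^{−(c+it)} dt, where the integral converges absolutely. -/
open MeasureTheory Set Complex

/-!
For fixed `x`, `F_{p,ν}(x)` is the Mellin transform at `ν` of `t ↦ exp(-x/t) exp(-t^p)`.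
Mellin inversion of `Γ` writes `exp(-x/t)` as the vertical integral of `Γ(s) x^{-s} t^s`, and by
Fubini the integral over `t` can be performed first: it is the Mellin transform of `exp(-t^p)` at
`s + ν`, that is `Γ((s + ν)/p)/|p|`. The same application of Fubini gives the absolute convergence
of the vertical integral, so decay is needed for the factor `Γ(s)` only, where
`Γ(s + 2) = (s + 1) s Γ(s)` provides `Γ(s) = O(|s|⁻²)`.
-/

section Mellin

variable {E : Type*} [NormedAddCommGroup E] [NormedSpace ℂ E] {σ x : ℝ} {w : ℂ}

theorem verticalIntegrable_cpow_neg_smul {φ : ℂ → E} (hφ : VerticalIntegrable φ σ) (hx : 0 < x) :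
    VerticalIntegrable (fun s ↦ (x : ℂ) ^ (-s) • φ s) σ := by
  have hcont : Continuous fun u : ℝ ↦ (x : ℂ) ^ (-(σ + u * I)) :=
    .const_cpow (by fun_prop) (.inl (ofReal_ne_zero.2 hx.ne'))
  refine hφ.bdd_smul (x ^ (-σ)) hcont.aestronglyMeasurable (.of_forall fun u ↦ ?_)
  simp [norm_cpow_eq_rpow_re_of_pos hx]

theorem integrable_prod_smul_cpow_smul {φ : ℂ → ℂ} {f : ℝ → E}
    (hφ : VerticalIntegrable φ σ) (hf : MellinConvergent f (σ + w)) :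
    Integrable (fun z : ℝ × ℝ ↦ φ (σ + z.1 * I) • (z.2 : ℂ) ^ (σ + z.1 * I + w - 1) • f z.2)
      (volume.prod (volume.restrict (Ioi 0))) := by
  have hpos : ∀ᵐ z ∂(volume : Measure ℝ).prod (volume.restrict (Ioi (0 : ℝ))), 0 < z.2 :=
    Measure.quasiMeasurePreserving_snd.ae (ae_restrict_mem measurableSet_Ioi)
  have hmeas : Measurable fun z : ℝ × ℝ ↦ (z.2 : ℂ) ^ ((z.1 : ℂ) * I) := by fun_prop
  have hnorm : ∀ᵐ z ∂(volume : Measure ℝ).prod (volume.restrict (Ioi (0 : ℝ))),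
      ‖(z.2 : ℂ) ^ ((z.1 : ℂ) * I)‖ ≤ 1 := by
    filter_upwards [hpos] with z hz
    simp [norm_cpow_eq_rpow_re_of_pos hz]
  -- Up to the factor `t ^ (u * I)`, of modulus one, the kernel is a product of functions of `u`
  -- and of `t`.
  refine ((hφ.smul_prod hf).bdd_smul 1 hmeas.aestronglyMeasurable hnorm).congr ?_
  filter_upwards [hpos] with z hz
  have hz0 : (z.2 : ℂ) ≠ 0 := ofReal_ne_zero.2 hz.ne'
  rw [Pi.smul_apply', smul_comm, ← mul_smul ((z.2 : ℂ) ^ _), ← cpow_add _ _ hz0]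
  ring_nf

theorem verticalIntegrable_smul_mellin {φ : ℂ → ℂ} {f : ℝ → E}
    (hφ : VerticalIntegrable φ σ) (hf : MellinConvergent f (σ + w)) :
    VerticalIntegrable (fun s ↦ φ s • mellin f (s + w)) σ := by
  simpa only [VerticalIntegrable, mellin, integral_smul] using
    (integrable_prod_smul_cpow_smul hφ hf).integral_prod_left

theorem cpow_smul_mellinInv_div_smul [CompleteSpace E] (φ : ℂ → ℂ) (v : E) (hx : 0 ≤ x) {t : ℝ}
    (ht : 0 < t) :
    (t : ℂ) ^ (w - 1) • mellinInv σ φ (x / t) • v = (1 / (2 * Real.pi)) • ∫ u : ℝ,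
      ((x : ℂ) ^ (-(σ + u * I)) • φ (σ + u * I)) • (t : ℂ) ^ (σ + u * I + w - 1) • v := by
  have ht0 : (t : ℂ) ≠ 0 := ofReal_ne_zero.2 ht.ne'
  rw [mellinInv, smul_assoc, smul_comm, ← integral_smul_const, ← integral_smul]
  refine congrArg _ (integral_congr_ae (.of_forall fun u ↦ ?_))
  simp only [smul_smul, smul_eq_mul]
  rw [ofReal_div, div_cpow_ofReal_nonneg hx ht.le, cpow_neg (t : ℂ), div_inv_eq_mul,
    add_sub_assoc, cpow_add _ (w - 1) ht0]
  ring_nf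

theorem mellin_mellinInv_div_smul {φ : ℂ → ℂ} {f : ℝ → E} (hφ : VerticalIntegrable φ σ)
    (hf : MellinConvergent f (σ + w)) (hx : 0 < x) :
    mellin (fun t ↦ mellinInv σ φ (x / t) • f t) w
      = mellinInv σ (fun s ↦ φ s • mellin f (s + w)) x := by
  by_cases hE : CompleteSpace E
  swap
  · simp [mellin, mellinInv, integral, hE]
  let K : ℝ → ℝ → E := fun u t ↦
    ((x : ℂ) ^ (-(σ + u * I)) • φ (σ + u * I)) • (t : ℂ) ^ (σ + u * I + w - 1) • f t
  have hK : Integrable (Function.uncurry K) (volume.prod (volume.restrict (Ioi 0))) :=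
    integrable_prod_smul_cpow_smul (verticalIntegrable_cpow_neg_smul hφ hx) hf
  calc mellin (fun t ↦ mellinInv σ φ (x / t) • f t) w
      = ∫ t in Ioi (0 : ℝ), (1 / (2 * Real.pi)) • ∫ u : ℝ, K u t :=
        setIntegral_congr_fun measurableSet_Ioi fun t ht ↦
          cpow_smul_mellinInv_div_smul φ (f t) hx.le ht
    _ = (1 / (2 * Real.pi)) • ∫ u : ℝ, ∫ t in Ioi (0 : ℝ), K u t := by
        rw [integral_smul, integral_integral_swap hK]
    _ = mellinInv σ (fun s ↦ φ s • mellin f (s + w)) x := by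
        simp only [K, mellinInv, mellin, integral_smul, smul_assoc]

end Mellin

section Gamma

variable {s : ℂ} {σ p x : ℝ}

theorem continuousAt_Gamma_of_re_pos (hs : 0 < s.re) : ContinuousAt Gamma s := by
  refine (differentiableAt_Gamma s fun m hm ↦ ?_).continuousAt
  rw [hm, neg_re, natCast_re] at hs
  linarith [m.cast_nonneg (α := ℝ)]

theorem norm_Gamma_le_Gamma_re (hs : 0 < s.re) : ‖Gamma s‖ ≤ Real.Gamma s.re := by
  rw [Gamma_eq_integral hs, Real.Gamma_eq_integral hs]
  refine (norm_integral_le_integral_norm _).trans_eq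
    (setIntegral_congr_fun measurableSet_Ioi fun t ht ↦ ?_)
  simp [norm_cpow_eq_rpow_re_of_pos ht, norm_exp]

theorem norm_Gamma_le_div_norm_sq (hs : 0 < s.re) :
    ‖Gamma s‖ ≤ Real.Gamma (s.re + 2) / ‖s‖ ^ 2 := by
  have hs0 : s ≠ 0 := ne_zero_of_re_pos hs
  have hs1 : s + 1 ≠ 0 := ne_zero_of_re_pos (by simp; linarith)
  have hGamma : Gamma (s + 2) = (s + 1) * (s * Gamma s) := by
    rw [← Gamma_add_one s hs0, ← Gamma_add_one _ hs1, add_assoc, one_add_one_eq_two]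
  have hle : ‖s‖ ≤ ‖s + 1‖ := by
    rw [← sq_le_sq₀ (norm_nonneg _) (norm_nonneg _), ← normSq_eq_norm_sq, ← normSq_eq_norm_sq]
    simp only [normSq_apply, add_re, one_re, add_im, one_im]
    linarith
  rw [le_div_iff₀ (by positivity)]
  calc ‖Gamma s‖ * ‖s‖ ^ 2 = ‖s‖ * (‖s‖ * ‖Gamma s‖) := by ring
    _ ≤ ‖s + 1‖ * (‖s‖ * ‖Gamma s‖) := by gcongr
    _ = ‖Gamma (s + 2)‖ := by rw [hGamma, norm_mul, norm_mul]
    _ ≤ Real.Gamma (s.re + 2) := by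
        simpa using norm_Gamma_le_Gamma_re (s := s + 2) (by simp; linarith)

theorem verticalIntegrable_inv_norm_sq (hσ : σ ≠ 0) :
    VerticalIntegrable (fun s ↦ (‖s‖ ^ 2)⁻¹) σ := by
  refine ((integrable_inv_one_add_sq.comp_mul_right' (inv_ne_zero hσ)).const_mul (σ ^ 2)⁻¹).congr
    (.of_forall fun u ↦ ?_)
  simp only [← normSq_eq_norm_sq, normSq_add_mul_I]
  field_simp

theorem verticalIntegrable_Gamma (hσ : 0 < σ) : VerticalIntegrable Gamma σ := by
  have hre (u : ℝ) : 0 < (σ + u * I : ℂ).re := by simpa using hσ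
  have hcont : Continuous fun u : ℝ ↦ Gamma (σ + u * I) := continuous_iff_continuousAt.2 fun u ↦
    (continuousAt_Gamma_of_re_pos (hre u)).comp (f := fun u : ℝ ↦ (σ + u * I : ℂ)) (by fun_prop)
  refine ((verticalIntegrable_inv_norm_sq hσ.ne').const_mul (Real.Gamma (σ + 2))).mono'
    hcont.aestronglyMeasurable (.of_forall fun u ↦ ?_)
  simpa [div_eq_mul_inv] using norm_Gamma_le_div_norm_sq (hre u)

theorem hasMellin_exp_neg (hs : 0 < s.re) : HasMellin (fun t : ℝ ↦ cexp (-t)) s (Gamma s) := by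
  constructor
  · simpa [MellinConvergent, mul_comm] using GammaIntegral_convergent hs
  · simp [Gamma_eq_integral hs, GammaIntegral_eq_mellin]

theorem hasMellin_exp_neg_rpow (hs : 0 < s.re / p) :
    HasMellin (fun t : ℝ ↦ cexp (-(t ^ p : ℝ))) s (|p|⁻¹ * Gamma (s / p)) := by
  have hp : p ≠ 0 := by rintro rfl; simp at hs
  have h := hasMellin_exp_neg (s := s / p) (by rwa [div_ofReal_re])
  refine ⟨(MellinConvergent.comp_rpow hp).2 h.1, ?_⟩
  rw [mellin_comp_rpow fun t : ℝ ↦ cexp (-t), h.2, real_smul, ofReal_inv]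

theorem mellinInv_Gamma (hσ : 0 < σ) (hx : 0 < x) : mellinInv σ Gamma x = cexp (-x) := by
  have h (u : ℝ) := hasMellin_exp_neg (s := σ + u * I) (by simpa using hσ)
  rw [← mellinInv_mellin_eq σ (fun t : ℝ ↦ cexp (-t)) hx]
  · simp only [mellinInv, (h _).2]
  · simpa using (h 0).1
  · simpa only [VerticalIntegrable, (h _).2] using verticalIntegrable_Gamma hσ
  · fun_prop

end Gamma

section Kratzel

variable {p c x : ℝ} {ν : ℂ}

/-- Krätzel's integral `F_{p,ν}(x)`, whose Mellin–Barnes representation is proved below. The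
exponent `p` may be negative. -/
noncomputable def kratzelIntegral (p : ℝ) (ν : ℂ) (x : ℝ) : ℂ :=
  ∫ t in Ioi (0 : ℝ), (t : ℂ) ^ (ν - 1) * cexp (-((t ^ p : ℝ) : ℂ) - ((x / t : ℝ) : ℂ))

theorem kratzelIntegral_eq_mellin (p : ℝ) (ν : ℂ) (x : ℝ) :
    kratzelIntegral p ν x
      = mellin (fun t : ℝ ↦ cexp (-(x / t : ℝ)) • cexp (-(t ^ p : ℝ))) ν := by
  refine setIntegral_congr_fun measurableSet_Ioi fun t _ ↦ ?_
  simp only [smul_eq_mul]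
  rw [← Complex.exp_add, neg_add_eq_sub, sub_eq_neg_add, neg_add_eq_sub, neg_sub_comm]

theorem mellin_exp_neg_rpow_vertical (hcν : 0 < (c + ν.re) / p) (u : ℝ) :
    mellin (fun t : ℝ ↦ cexp (-(t ^ p : ℝ))) (c + u * I + ν)
      = |p|⁻¹ * Gamma ((c + u * I + ν) / p) :=
  (hasMellin_exp_neg_rpow (by simpa using hcν)).2

theorem verticalIntegrable_Gamma_mul_Gamma_div (hc : 0 < c) (hcν : 0 < (c + ν.re) / p) :
    VerticalIntegrable (fun s ↦ Gamma s * Gamma ((s + ν) / p)) c := by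
  have hp : |p| ≠ 0 := abs_ne_zero.2 (by rintro rfl; simp at hcν)
  have hconv : MellinConvergent (fun t : ℝ ↦ cexp (-(t ^ p : ℝ))) (c + ν) :=
    (hasMellin_exp_neg_rpow (by simpa using hcν)).1
  refine ((verticalIntegrable_smul_mellin (verticalIntegrable_Gamma hc) hconv).const_mul
    ((|p| : ℝ) : ℂ)).congr (.of_forall fun u ↦ ?_)
  simp only [mellin_exp_neg_rpow_vertical hcν, smul_eq_mul]
  rw [mul_left_comm, ofReal_inv, mul_inv_cancel_left₀ (ofReal_ne_zero.2 hp)]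

theorem kratzelIntegral_eq_mellinInv (hx : 0 < x) (hc : 0 < c) (hcν : 0 < (c + ν.re) / p) :
    kratzelIntegral p ν x
      = |p|⁻¹ * mellinInv c (fun s ↦ Gamma s * Gamma ((s + ν) / p)) x := by
  let f : ℝ → ℂ := fun t ↦ cexp (-(t ^ p : ℝ))
  have hf : MellinConvergent f (c + ν) := (hasMellin_exp_neg_rpow (by simpa using hcν)).1
  calc kratzelIntegral p ν x
      = mellin (fun t ↦ cexp (-(x / t : ℝ)) • f t) ν := kratzelIntegral_eq_mellin p ν x
    _ = mellin (fun t ↦ mellinInv c Gamma (x / t) • f t) ν :=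
        setIntegral_congr_fun measurableSet_Ioi fun t ht ↦ by
          simp only [mellinInv_Gamma hc (div_pos hx ht)]
    _ = mellinInv c (fun s ↦ Gamma s • mellin f (s + ν)) x :=
        mellin_mellinInv_div_smul (verticalIntegrable_Gamma hc) hf hx
    _ = |p|⁻¹ * mellinInv c (fun s ↦ Gamma s * Gamma ((s + ν) / p)) x := by
        simp only [mellinInv, f, mellin_exp_neg_rpow_vertical hcν, smul_eq_mul, real_smul,
          mul_left_comm _ ((|p|⁻¹ : ℝ) : ℂ), integral_const_mul]

end Kratzel

theorem kratzel_mellin_barnes_general {p c x : ℝ} {ν : ℂ} (hx : 0 < x) (hc : 0 < c)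
    (hcν : 0 < (c + ν.re) / p) :
    Integrable (fun t : ℝ ↦
      Gamma (c + t * I) * Gamma ((c + t * I + ν) / p) * (x : ℂ) ^ (-(c + t * I))) ∧
    kratzelIntegral p ν x = (1 / (2 * Real.pi * |p|) : ℂ) * ∫ t : ℝ,
      Gamma (c + t * I) * Gamma ((c + t * I + ν) / p) * (x : ℂ) ^ (-(c + t * I)) := by
  have hcomm (t : ℝ) : (x : ℂ) ^ (-(c + t * I)) • (Gamma (c + t * I) * Gamma ((c + t * I + ν) / p))
      = Gamma (c + t * I) * Gamma ((c + t * I + ν) / p) * (x : ℂ) ^ (-(c + t * I)) :=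
    mul_comm _ _
  constructor
  · simpa only [VerticalIntegrable, hcomm] using
      verticalIntegrable_cpow_neg_smul (verticalIntegrable_Gamma_mul_Gamma_div hc hcν) hx
  · rw [kratzelIntegral_eq_mellinInv hx hc hcν, mellinInv, real_smul, ← mul_assoc]
    simp only [hcomm]
    push_cast
    ring

/-- Mellin–Barnes representation of Krätzel's integral: for `p > 0`, `ν ∈ ℂ`, `x > 0` and
`c > max(0, -Re ν)`, the integral along the vertical line `Re s = c` converges absolutely
and `F_{p,ν}(x) = (1/(2π p)) ∫_{-∞}^∞ Γ(c+it) Γ((c+it+ν)/p) x^{-(c+it)} dt`. -/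
theorem kratzel_mellin_barnes (p : ℝ) (hp : 0 < p) (ν : ℂ) (x : ℝ) (hx : 0 < x)
    (c : ℝ) (hc : max 0 (-ν.re) < c) :
    Integrable (fun t : ℝ =>
      Complex.Gamma (c + t * I) * Complex.Gamma ((c + t * I + ν) / p)
        * (x : ℂ) ^ (-(c + t * I))) ∧
    ∫ t in Ioi (0 : ℝ), (t : ℂ) ^ (ν - 1) * Complex.exp (-((t ^ p : ℝ) : ℂ) - ((x / t : ℝ) : ℂ))
      = (1 / (2 * Real.pi * p) : ℂ) * ∫ t : ℝ,
          Complex.Gamma (c + t * I) * Complex.Gamma ((c + t * I + ν) / p)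
            * (x : ℂ) ^ (-(c + t * I)) := by
  obtain ⟨hc0, hcν⟩ := max_lt_iff.1 hc
  simpa only [kratzelIntegral, abs_of_pos hp] using
    kratzel_mellin_barnes_general hx hc0 (div_pos (by linarith : 0 < c + ν.re) hp)
end

section
/- Let p > 0, ν ≥ −1/2, and a, b ∈ ℝ, and let I(a,b;−x) = √(2p/π) ∫₀^1 t^(a−1/2) (1−t)^(b−1/2) e^{−xt} K_ν(p/(t(1−t))) dt. Then, as x → +∞, I(a,b;−x) ~ √π · p^{a/2 + 1/4} · x^{−a/2 − 3/4} · exp(−p − 2√(px)); that is, the quotient of I(a,b;−x) by the displayed expression tends to 1 as x → +∞. -/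
open MeasureTheory Set Filter

/-- The modified Bessel function of the second kind, for `w > 0` and real order `ν`:
`K_ν(w) = ∫₀^∞ e^{-w cosh u} cosh(ν u) du`. -/
noncomputable def besselK (ν w : ℝ) : ℝ :=
  ∫ u in Ioi (0 : ℝ), Real.exp (-w * Real.cosh u) * Real.cosh (ν * u)

/-!
Since `p / (t (1 - t)) = p / t + p / (1 - t)`, extracting `e^{-w}` and `w^{-1/2}` from `K_ν(w)`
turns the integral into `∫ t ^ a e^{-x t - p / t} F(t) dt`, where `F` is bounded and
`F(0+) = e^{-p} √(π / 2)`. The exponent is stationary at `t = √(p / x)`, and `t = √(p / x) e^u`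
turns it into `-2 √(p x) cosh u`. The same phase `cosh u` occurs in the integral defining `K_ν`,
so one instance of Laplace's method yields both the behaviour of `K_ν(w)` for large `w`, hence
`F(0+)`, and that of the integral itself.
-/

open Real Topology Asymptotics

section CoshPhase

lemma cosh_sub_one (u : ℝ) : cosh u - 1 = 2 * sinh (u / 2) ^ 2 := by
  have h := cosh_two_mul (u / 2)
  rw [mul_div_cancel₀ u two_ne_zero, cosh_sq] at h
  linarith

lemma sq_le_sinh_sq (u : ℝ) : u ^ 2 ≤ sinh u ^ 2 := by
  rw [sq_le_sq, abs_sinh]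
  exact self_le_sinh_iff.2 (abs_nonneg u)

lemma sq_div_two_le_cosh_sub_one (u : ℝ) : u ^ 2 / 2 ≤ cosh u - 1 := by
  rw [cosh_sub_one]
  linarith [sq_le_sinh_sq (u / 2)]

lemma isEquivalent_cosh_sub_one : (fun u : ℝ ↦ cosh u - 1) ~[𝓝 0] fun u ↦ u ^ 2 / 2 := by
  have half : Tendsto (fun u : ℝ ↦ u / 2) (𝓝 0) (𝓝 0) := by
    simpa using (continuous_id.div_const (2 : ℝ)).tendsto 0
  have sinh_half : (fun u : ℝ ↦ sinh (u / 2)) ~[𝓝 0] fun u ↦ u / 2 :=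
    Real.isEquivalent_sinh.comp_tendsto half
  have square : (fun u : ℝ ↦ 2 * sinh (u / 2) ^ 2) ~[𝓝 0] fun u ↦ 2 * (u / 2) ^ 2 :=
    IsEquivalent.refl.mul (sinh_half.pow 2)
  have quarter (u : ℝ) : 2 * (u / 2) ^ 2 = u ^ 2 / 2 := by ring
  simpa only [← cosh_sub_one, quarter] using square

lemma cosh_le_exp_abs (u : ℝ) : cosh u ≤ exp |u| := by
  rw [cosh_eq]
  linarith [exp_le_exp.2 (le_abs_self u), exp_le_exp.2 (neg_le_abs u)]

variable {ι : Type*} {l : Filter ι} {w : ι → ℝ}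

lemma tendsto_div_sqrt_zero (hw : Tendsto w l atTop) (v : ℝ) :
    Tendsto (fun i ↦ v / √(w i)) l (𝓝 0) :=
  (tendsto_sqrt_atTop.comp hw).const_div_atTop v

lemma tendsto_mul_cosh_div_sqrt_sub_one (hw : Tendsto w l atTop) (v : ℝ) :
    Tendsto (fun i ↦ w i * (cosh (v / √(w i)) - 1)) l (𝓝 (v ^ 2 / 2)) := by
  have equiv := (IsEquivalent.refl (u := w)).mul
    (isEquivalent_cosh_sub_one.comp_tendsto (tendsto_div_sqrt_zero hw v))
  refine (equiv.congr_right (w := fun _ ↦ v ^ 2 / 2) ?_).symm.tendsto_nhds tendsto_const_nhds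
  filter_upwards [hw.eventually_gt_atTop 0] with i hi
  simp only [Pi.mul_apply, Function.comp_apply, div_pow, sq_sqrt hi.le]
  field_simp

end CoshPhase

section LaplaceMethod

variable {E : Type*} [NormedAddCommGroup E] [NormedSpace ℝ E]

lemma sqrt_smul_integral_exp_cosh_smul (w : ℝ) (g : ℝ → E) :
    √w • ∫ u, exp (-w * (cosh u - 1)) • g u =
      ∫ v, exp (-w * (cosh (v / √w) - 1)) • g (v / √w) := by
  rw [Measure.integral_comp_div (fun u ↦ exp (-w * (cosh u - 1)) • g u), abs_of_nonneg (by simp)]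

lemma norm_exp_cosh_smul_le {w₀ w c C : ℝ} (hw₀ : 0 < w₀) (hw : w₀ ≤ w) {g : ℝ → E}
    (hg : ∀ u, ‖g u‖ ≤ C * exp (c * |u|)) (v : ℝ) :
    ‖exp (-w * (cosh (v / √w) - 1)) • g (v / √w)‖ ≤
      C * exp (c ^ 2 / w₀) * exp (-(1 / 4) * v ^ 2) := by
  have w_pos : 0 < w := hw₀.trans_le hw
  have C_nonneg : 0 ≤ C :=
    nonneg_of_mul_nonneg_left ((norm_nonneg _).trans (hg 0)) (exp_pos _)
  have sq_v : w * (v / √w) ^ 2 = v ^ 2 := by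
    rw [div_pow, sq_sqrt w_pos.le]
    field_simp
  have quadratic : v ^ 2 / 2 ≤ w * (cosh (v / √w) - 1) := by
    rw [← sq_v, mul_div_assoc]
    exact mul_le_mul_of_nonneg_left (sq_div_two_le_cosh_sub_one _) w_pos.le
  -- AM-GM: `c r ≤ c ^ 2 / w + w r ^ 2 / 4` for `r = |v| / √w`
  have linear : c * |v / √w| ≤ c ^ 2 / w₀ + v ^ 2 / 4 := by
    have amgm : 0 ≤ w * (c / w - |v / √w| / 2) ^ 2 := by positivity
    have expand : w * (c / w - |v / √w| / 2) ^ 2 =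
        c ^ 2 / w - c * |v / √w| + w * |v / √w| ^ 2 / 4 := by
      field_simp
      ring
    rw [expand, sq_abs, sq_v] at amgm
    linarith [div_le_div_of_nonneg_left (sq_nonneg c) hw₀ hw]
  calc ‖exp (-w * (cosh (v / √w) - 1)) • g (v / √w)‖
      ≤ exp (-w * (cosh (v / √w) - 1)) * (C * exp (c * |v / √w|)) := by
        rw [norm_smul, norm_of_nonneg (exp_pos _).le]
        gcongr
        exact hg _
    _ = C * exp (-w * (cosh (v / √w) - 1) + c * |v / √w|) := by
        rw [exp_add]
        ring
    _ ≤ C * exp (c ^ 2 / w₀ + -(1 / 4) * v ^ 2) := by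
        refine mul_le_mul_of_nonneg_left (exp_le_exp.2 ?_) C_nonneg
        linarith
    _ = C * exp (c ^ 2 / w₀) * exp (-(1 / 4) * v ^ 2) := by rw [exp_add, mul_assoc]

lemma integrable_const_mul_exp_neg_quarter_mul_sq (C : ℝ) :
    Integrable fun v : ℝ ↦ C * exp (-(1 / 4) * v ^ 2) :=
  (integrable_exp_neg_mul_sq (by norm_num)).const_mul C

lemma norm_sqrt_smul_integral_exp_cosh_smul_le {w₀ w c C : ℝ} (hw₀ : 0 < w₀) (hw : w₀ ≤ w)
    {g : ℝ → E} (hg : ∀ u, ‖g u‖ ≤ C * exp (c * |u|)) :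
    ‖√w • ∫ u, exp (-w * (cosh u - 1)) • g u‖ ≤
      C * exp (c ^ 2 / w₀) * √(π / (1 / 4)) := by
  rw [sqrt_smul_integral_exp_cosh_smul, ← integral_gaussian, ← integral_const_mul]
  exact norm_integral_le_of_norm_le (integrable_const_mul_exp_neg_quarter_mul_sq _)
    (.of_forall (norm_exp_cosh_smul_le hw₀ hw hg))

theorem tendsto_sqrt_smul_integral_exp_cosh_smul [CompleteSpace E] {ι : Type*} {l : Filter ι}
    [l.IsCountablyGenerated] {w : ι → ℝ} {g : ι → ℝ → E} {c C : ℝ} {L : E}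
    (hw : Tendsto w l atTop) (hg_meas : ∀ᶠ i in l, StronglyMeasurable (g i))
    (hg_bound : ∀ᶠ i in l, ∀ u, ‖g i u‖ ≤ C * exp (c * |u|))
    (hg_lim : ∀ v, Tendsto (fun i ↦ g i (v / √(w i))) l (𝓝 L)) :
    Tendsto (fun i ↦ √(w i) • ∫ u, exp (-w i * (cosh u - 1)) • g i u) l
      (𝓝 (√(2 * π) • L)) := by
  have gaussian : √(2 * π) • L = ∫ v : ℝ, exp (-(1 / 2) * v ^ 2) • L := by
    rw [integral_smul_const, integral_gaussian, div_div_eq_mul_div, div_one, mul_comm π]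
  rw [gaussian]
  have rescaled : Tendsto
      (fun i ↦ ∫ v, exp (-w i * (cosh (v / √(w i)) - 1)) • g i (v / √(w i))) l
      (𝓝 (∫ v : ℝ, exp (-(1 / 2) * v ^ 2) • L)) := by
    refine tendsto_integral_filter_of_dominated_convergence
      (fun v ↦ C * exp (c ^ 2 / 1) * exp (-(1 / 4) * v ^ 2)) ?_ ?_
      (integrable_const_mul_exp_neg_quarter_mul_sq _) (.of_forall fun v ↦ ?_)
    · filter_upwards [hg_meas] with i hi
      have weight : Measurable fun v : ℝ ↦ exp (-w i * (cosh (v / √(w i)) - 1)) := by fun_prop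
      exact (weight.stronglyMeasurable.smul
        (hi.comp_measurable (measurable_id.div_const _))).aestronglyMeasurable
    · filter_upwards [hg_bound, hw.eventually_ge_atTop 1] with i hi hwi
      exact .of_forall (norm_exp_cosh_smul_le one_pos hwi hi)
    · have phase := (tendsto_mul_cosh_div_sqrt_sub_one hw v).neg.rexp.smul (hg_lim v)
      convert phase using 3 <;> ring_nf
  exact rescaled.congr fun i ↦ (sqrt_smul_integral_exp_cosh_smul (w i) (g i)).symm

end LaplaceMethod

/-- The modified Bessel function `K_ν(w)` divided by the decay `w^{-1/2} e^{-w}` it has at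
infinity. -/
noncomputable def scaledBesselK (ν w : ℝ) : ℝ := √w * exp w * besselK ν w

lemma besselK_eq_integral (ν w : ℝ) :
    besselK ν w = 1 / 2 * ∫ u, exp (-w * cosh u) * cosh (ν * u) := by
  have even (u : ℝ) : exp (-w * cosh |u|) * cosh (ν * |u|) = exp (-w * cosh u) * cosh (ν * u) := by
    rw [cosh_abs, ← cosh_abs (ν * |u|), abs_mul, abs_abs, ← abs_mul, cosh_abs]
  have h := integral_comp_abs (f := fun u ↦ exp (-w * cosh u) * cosh (ν * u))
  simp only [even] at h
  rw [h, besselK]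
  ring

lemma scaledBesselK_eq_integral (ν w : ℝ) :
    scaledBesselK ν w = 1 / 2 * √w • ∫ u, exp (-w * (cosh u - 1)) • cosh (ν * u) := by
  have shift : ∀ u, exp (-w * (cosh u - 1)) • cosh (ν * u) =
      exp w * (exp (-w * cosh u) * cosh (ν * u)) := fun u ↦ by
    rw [smul_eq_mul, ← mul_assoc, ← exp_add]
    ring_nf
  simp_rw [shift]
  rw [integral_const_mul, scaledBesselK, besselK_eq_integral, smul_eq_mul]
  ring

lemma norm_cosh_mul_le (ν u : ℝ) : ‖cosh (ν * u)‖ ≤ 1 * exp (|ν| * |u|) := by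
  rw [norm_of_nonneg (cosh_pos _).le, one_mul, ← abs_mul]
  exact cosh_le_exp_abs _

lemma exists_abs_scaledBesselK_le (ν : ℝ) {w₀ : ℝ} (hw₀ : 0 < w₀) :
    ∃ C, ∀ w, w₀ ≤ w → |scaledBesselK ν w| ≤ C := by
  refine ⟨1 / 2 * (1 * exp (|ν| ^ 2 / w₀) * √(π / (1 / 4))), fun w hw ↦ ?_⟩
  rw [scaledBesselK_eq_integral, abs_mul, abs_of_pos one_half_pos]
  gcongr
  exact norm_sqrt_smul_integral_exp_cosh_smul_le hw₀ hw (norm_cosh_mul_le ν)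

theorem tendsto_scaledBesselK_atTop (ν : ℝ) :
    Tendsto (scaledBesselK ν) atTop (𝓝 √(π / 2)) := by
  have cosh_lim (v : ℝ) : Tendsto (fun w : ℝ ↦ cosh (ν * (v / √w))) atTop (𝓝 1) := by
    have cont : Continuous fun u ↦ cosh (ν * u) := by fun_prop
    simpa [Function.comp_def] using (cont.tendsto 0).comp (tendsto_div_sqrt_zero tendsto_id v)
  have laplace := (tendsto_sqrt_smul_integral_exp_cosh_smul tendsto_id
    (.of_forall fun _ ↦ (by fun_prop : Continuous fun u ↦ cosh (ν * u)).stronglyMeasurable)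
    (.of_forall fun _ ↦ norm_cosh_mul_le ν) cosh_lim).const_mul (1 / 2)
  have half_sqrt : 1 / 2 * √(2 * π) • (1 : ℝ) = √(π / 2) := by
    rw [show 2 * π = 2 ^ 2 * (π / 2) by ring, sqrt_mul (by positivity),
      sqrt_sq zero_le_two, smul_eq_mul]
    ring
  rw [half_sqrt] at laplace
  exact laplace.congr fun w ↦ (scaledBesselK_eq_integral ν w).symm

lemma measurable_scaledBesselK (ν : ℝ) : Measurable (scaledBesselK ν) := by
  have integrand : Measurable fun q : ℝ × ℝ ↦ exp (-q.1 * cosh q.2) * cosh (ν * q.2) := by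
    fun_prop
  have bessel : Measurable (besselK ν) :=
    (integrand.stronglyMeasurable.integral_prod_right (f := fun w u ↦
      exp (-w * cosh u) * cosh (ν * u))).measurable
  unfold scaledBesselK
  fun_prop

section SaddlePoint

variable {E : Type*} [NormedAddCommGroup E] [NormedSpace ℝ E]

lemma integral_Ioi_eq_integral_exp_smul (g : ℝ → E) :
    ∫ t in Ioi 0, g t = ∫ u, exp u • g (exp u) := by
  have h := integral_image_eq_integral_abs_deriv_smul MeasurableSet.univ
    (fun u _ ↦ (Real.hasDerivAt_exp u).hasDerivWithinAt) exp_injective.injOn g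
  simpa only [image_univ, range_exp, abs_exp, setIntegral_univ] using h

lemma integral_Ioi_eq_integral_mul_exp_smul {c : ℝ} (hc : 0 < c) (g : ℝ → E) :
    ∫ t in Ioi 0, g t = ∫ u, (c * exp u) • g (c * exp u) := by
  have h := integral_comp_mul_left_Ioi g 0 hc
  rw [mul_zero, eq_inv_smul_iff₀ hc.ne'] at h
  rw [← h, integral_Ioi_eq_integral_exp_smul, ← integral_smul]
  simp only [mul_smul]

lemma mul_sqrt_div_mul_exp_add {p x : ℝ} (hp : 0 < p) (hx : 0 < x) (u : ℝ) :
    x * (√(p / x) * exp u) + p / (√(p / x) * exp u) = 2 * √(p * x) * cosh u := by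
  have hsx : √x ^ 2 = x := sq_sqrt hx.le
  have hsp : √p ^ 2 = p := sq_sqrt hp.le
  rw [sqrt_div hp.le, sqrt_mul hp.le, cosh_eq, exp_neg]
  nth_rewrite 1 [← hsx]
  nth_rewrite 2 [← hsp]
  field_simp

lemma integral_rpow_mul_exp_neg_mul_sub_div_smul {p x : ℝ} (hp : 0 < p) (hx : 0 < x) (a : ℝ)
    (F : ℝ → E) :
    ∫ t in Ioi 0, (t ^ a * exp (-x * t - p / t)) • F t =
      (√(p / x) ^ (a + 1) * exp (-2 * √(p * x))) •
        ∫ u, exp (-(2 * √(p * x)) * (cosh u - 1)) •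
          exp ((a + 1) * u) • F (√(p / x) * exp u) := by
  have c_pos : 0 < √(p / x) := sqrt_pos.2 (div_pos hp hx)
  rw [integral_Ioi_eq_integral_mul_exp_smul c_pos, ← integral_smul]
  congr 1 with u
  have phase : -x * (√(p / x) * exp u) - p / (√(p / x) * exp u) =
      -2 * √(p * x) + -(2 * √(p * x)) * (cosh u - 1) := by
    linarith [mul_sqrt_div_mul_exp_add hp hx u]
  have power : √(p / x) * exp u * (√(p / x) * exp u) ^ a =
      √(p / x) ^ (a + 1) * exp ((a + 1) * u) := by
    rw [mul_comm (a + 1) u, exp_mul, ← mul_rpow c_pos.le (exp_pos u).le,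
      rpow_add_one (by positivity), mul_comm]
  simp only [smul_smul]
  rw [phase, exp_add, ← mul_assoc, power]
  congr 1
  ring

lemma sqrt_div_rpow_add_one {p x : ℝ} (hp : 0 < p) (hx : 0 < x) (a : ℝ) :
    √(p / x) ^ (a + 1) = p ^ (a / 2 + 1 / 4) * x ^ (-a / 2 - 3 / 4) * √√(p * x) := by
  simp only [sqrt_eq_rpow]
  rw [← rpow_mul (by positivity), ← rpow_mul (by positivity), div_rpow hp.le hx.le,
    mul_rpow hp.le hx.le, div_eq_mul_inv, ← rpow_neg hx.le, mul_mul_mul_comm, ← rpow_add hp,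
    ← rpow_add hx]
  congr 2 <;> ring

theorem tendsto_inv_smul_integral_rpow_mul_exp_neg_mul_sub_div_smul [CompleteSpace E] {p : ℝ}
    (hp : 0 < p) (a : ℝ) {F : ℝ → E} (hF : StronglyMeasurable F) {C : ℝ}
    (hC : ∀ t, 0 < t → ‖F t‖ ≤ C) {L : E} (hL : Tendsto F (𝓝[>] 0) (𝓝 L)) :
    Tendsto (fun x ↦
      (p ^ (a / 2 + 1 / 4) * x ^ (-a / 2 - 3 / 4) * exp (-2 * √(p * x)))⁻¹ •
        ∫ t in Ioi 0, (t ^ a * exp (-x * t - p / t)) • F t) atTop (𝓝 (√π • L)) := by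
  have w_lim : Tendsto (fun x ↦ 2 * √(p * x)) atTop atTop :=
    (tendsto_sqrt_atTop.comp (tendsto_id.const_mul_atTop hp)).const_mul_atTop two_pos
  have saddle_lim : Tendsto (fun x ↦ √(p / x)) atTop (𝓝 0) := by
    simpa using (tendsto_id.const_div_atTop p).sqrt
  have bound : ∀ᶠ x in atTop, ∀ u,
      ‖exp ((a + 1) * u) • F (√(p / x) * exp u)‖ ≤ C * exp (|a + 1| * |u|) := by
    filter_upwards [eventually_gt_atTop 0] with x hx u
    have c_pos : 0 < √(p / x) := sqrt_pos.2 (div_pos hp hx)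
    rw [norm_smul, norm_of_nonneg (exp_pos _).le, mul_comm, ← abs_mul]
    have hCu := hC _ (mul_pos c_pos (exp_pos u))
    exact mul_le_mul hCu (exp_le_exp.2 (le_abs_self _)) (exp_pos _).le
      ((norm_nonneg _).trans hCu)
  have pointwise (v : ℝ) : Tendsto (fun x ↦ exp ((a + 1) * (v / √(2 * √(p * x)))) •
      F (√(p / x) * exp (v / √(2 * √(p * x))))) atTop (𝓝 L) := by
    have zero := tendsto_div_sqrt_zero w_lim v
    have weight := (zero.const_mul (a + 1)).rexp
    have argument : Tendsto (fun x ↦ √(p / x) * exp (v / √(2 * √(p * x)))) atTop (𝓝[>] 0) := by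
      refine tendsto_nhdsWithin_iff.2 ⟨by simpa using saddle_lim.mul zero.rexp, ?_⟩
      filter_upwards [eventually_gt_atTop 0] with x hx
      exact mul_pos (sqrt_pos.2 (div_pos hp hx)) (exp_pos _)
    simpa using weight.smul (hL.comp argument)
  have laplace := (tendsto_sqrt_smul_integral_exp_cosh_smul w_lim (.of_forall fun x ↦
    (by fun_prop : Measurable fun u ↦ exp ((a + 1) * u)).stronglyMeasurable.smul
      (hF.comp_measurable (by fun_prop : Measurable fun u ↦ √(p / x) * exp u)))
    bound pointwise).const_smul (√2)⁻¹
  rw [smul_smul, sqrt_mul zero_le_two, inv_mul_cancel_left₀ (by positivity)] at laplace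
  refine laplace.congr' ?_
  filter_upwards [eventually_gt_atTop 0] with x hx
  rw [integral_rpow_mul_exp_neg_mul_sub_div_smul hp hx, sqrt_div_rpow_add_one hp hx, smul_smul,
    smul_smul, sqrt_mul zero_le_two, inv_mul_cancel_left₀ (by positivity)]
  congr 1
  field_simp

end SaddlePoint

/-- The factor `F(t)` left when `t ^ a e^{-x t - p / t}` is extracted from
`√p t^(a-1/2) (1-t)^(b-1/2) e^{-xt} K_ν(p/(t(1-t)))`. It is extended by zero so that the integral
over `(0, 1)` becomes one over the half-line. -/
noncomputable def whittakerAmplitude (p ν b : ℝ) : ℝ → ℝ :=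
  indicator (Ioo 0 1) fun t ↦
    (1 - t) ^ b * exp (-p / (1 - t)) * scaledBesselK ν (p / (t * (1 - t)))

lemma measurable_whittakerAmplitude (p ν b : ℝ) : Measurable (whittakerAmplitude p ν b) := by
  have bessel := measurable_scaledBesselK ν
  exact Measurable.indicator (by fun_prop) measurableSet_Ioo

lemma exists_rpow_mul_exp_neg_div_le {p : ℝ} (hp : 0 < p) (b : ℝ) :
    ∃ C, ∀ s ∈ Ioo (0 : ℝ) 1, s ^ b * exp (-p / s) ≤ C := by
  obtain ⟨n, hn⟩ := exists_nat_ge (-b)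
  refine ⟨n.factorial / p ^ n, fun s ⟨s_pos, s_lt_one⟩ ↦ ?_⟩
  have power : s ^ b ≤ (s ^ n)⁻¹ := by
    rw [← rpow_natCast, ← rpow_neg s_pos.le]
    exact rpow_le_rpow_of_exponent_ge s_pos s_lt_one.le (by linarith)
  have exponential : exp (-p / s) ≤ ((p / s) ^ n / n.factorial)⁻¹ := by
    rw [neg_div, exp_neg]
    exact inv_anti₀ (by positivity) (pow_div_factorial_le_exp _ (by positivity) n)
  calc s ^ b * exp (-p / s) ≤ (s ^ n)⁻¹ * ((p / s) ^ n / n.factorial)⁻¹ := by gcongr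
    _ = n.factorial / p ^ n := by
      rw [div_pow]
      field_simp

lemma exists_abs_whittakerAmplitude_le {p : ℝ} (hp : 0 < p) (ν b : ℝ) :
    ∃ C, ∀ t, |whittakerAmplitude p ν b t| ≤ C := by
  obtain ⟨C₁, hC₁⟩ := exists_rpow_mul_exp_neg_div_le hp b
  obtain ⟨C₂, hC₂⟩ := exists_abs_scaledBesselK_le ν hp
  have C₁_nonneg : 0 ≤ C₁ := le_trans (by positivity) (hC₁ (1 / 2) (by norm_num))
  have C₂_nonneg : 0 ≤ C₂ := (abs_nonneg _).trans (hC₂ p le_rfl)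
  refine ⟨C₁ * C₂, fun t ↦ ?_⟩
  by_cases ht : t ∈ Ioo (0 : ℝ) 1
  · have ⟨t_pos, t_lt_one⟩ := ht
    have s_pos : 0 < 1 - t := sub_pos.2 t_lt_one
    have p_le : p ≤ p / (t * (1 - t)) :=
      le_div_self hp.le (by positivity) (mul_le_one₀ t_lt_one.le s_pos.le (by linarith))
    rw [whittakerAmplitude, indicator_of_mem ht, abs_mul,
      abs_of_nonneg (by positivity)]
    gcongr
    · exact hC₁ (1 - t) ⟨s_pos, by linarith⟩
    · exact hC₂ _ p_le
  · rw [whittakerAmplitude, indicator_of_notMem ht, abs_zero]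
    positivity

lemma tendsto_div_mul_one_sub_atTop {p : ℝ} (hp : 0 < p) :
    Tendsto (fun t : ℝ ↦ p / (t * (1 - t))) (𝓝[>] 0) atTop := by
  have denominator : Tendsto (fun t : ℝ ↦ t * (1 - t)) (𝓝[>] 0) (𝓝[>] 0) := by
    refine tendsto_nhdsWithin_iff.2 ⟨?_, ?_⟩
    · have cont : Continuous fun t : ℝ ↦ t * (1 - t) := by fun_prop
      simpa using (cont.tendsto 0).mono_left nhdsWithin_le_nhds
    · filter_upwards [Ioo_mem_nhdsGT one_pos] with t ht
      exact mul_pos ht.1 (sub_pos.2 ht.2)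
  exact denominator.inv_tendsto_nhdsGT_zero.const_mul_atTop hp

lemma tendsto_whittakerAmplitude_nhdsGT_zero {p : ℝ} (hp : 0 < p) (ν b : ℝ) :
    Tendsto (whittakerAmplitude p ν b) (𝓝[>] 0) (𝓝 (exp (-p) * √(π / 2))) := by
  have regular : Tendsto (fun t : ℝ ↦ (1 - t) ^ b * exp (-p / (1 - t))) (𝓝[>] 0)
      (𝓝 (exp (-p))) := by
    have cont : ContinuousAt (fun t : ℝ ↦ (1 - t) ^ b * exp (-p / (1 - t))) 0 := by
      fun_prop (disch := norm_num)
    simpa using cont.tendsto.mono_left nhdsWithin_le_nhds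
  refine (regular.mul
    ((tendsto_scaledBesselK_atTop ν).comp (tendsto_div_mul_one_sub_atTop hp))).congr' ?_
  filter_upwards [Ioo_mem_nhdsGT one_pos] with t ht
  rw [whittakerAmplitude, indicator_of_mem ht, Function.comp_apply]

lemma sqrt_mul_rpow_mul_besselK_eq {p t : ℝ} (hp : 0 < p) (ht : t ∈ Ioo (0 : ℝ) 1)
    (ν a b x : ℝ) :
    √p * (t ^ (a - 1 / 2) * (1 - t) ^ (b - 1 / 2) * exp (-x * t) *
        besselK ν (p / (t * (1 - t)))) =
      (t ^ a * exp (-x * t - p / t)) * whittakerAmplitude p ν b t := by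
  have t_pos : 0 < t := ht.1
  have s_pos : 0 < 1 - t := sub_pos.2 ht.2
  have sqrt_arg : √(p / (t * (1 - t))) = √p / (√t * √(1 - t)) := by
    rw [sqrt_div hp.le, sqrt_mul t_pos.le]
  have partial_fractions : -x * t = -p / (1 - t) + p / (t * (1 - t)) + (-x * t - p / t) := by
    field_simp
    ring
  rw [whittakerAmplitude, indicator_of_mem ht, scaledBesselK, sqrt_arg, rpow_sub t_pos,
    rpow_sub s_pos, ← sqrt_eq_rpow, ← sqrt_eq_rpow]
  nth_rewrite 1 [partial_fractions]
  rw [exp_add, exp_add]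
  field_simp

lemma sqrt_mul_integral_besselK_eq {p : ℝ} (hp : 0 < p) (ν a b x : ℝ) :
    √p * ∫ t in Ioo (0 : ℝ) 1, t ^ (a - 1 / 2) * (1 - t) ^ (b - 1 / 2) * exp (-x * t) *
        besselK ν (p / (t * (1 - t))) =
      ∫ t in Ioi 0, (t ^ a * exp (-x * t - p / t)) • whittakerAmplitude p ν b t := by
  have vanishes : ∀ t ∈ Ioi (0 : ℝ) \ Ioo 0 1,
      (t ^ a * exp (-x * t - p / t)) • whittakerAmplitude p ν b t = 0 := fun t ht ↦ by
    rw [whittakerAmplitude, indicator_of_notMem ht.2, smul_zero]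
  rw [setIntegral_eq_of_subset_of_forall_sdiff_eq_zero measurableSet_Ioi Ioo_subset_Ioi_self
    vanishes, ← integral_const_mul]
  exact setIntegral_congr_fun measurableSet_Ioo fun t ht ↦
    sqrt_mul_rpow_mul_besselK_eq hp ht ν a b x

theorem extended_whittaker_asymptotics_general (p : ℝ) (hp : 0 < p) (ν a b : ℝ) :
    Tendsto (fun x : ℝ =>
      (Real.sqrt (2 * p / Real.pi)
          * ∫ t in Ioo (0 : ℝ) 1, t ^ (a - 1/2) * (1 - t) ^ (b - 1/2)
              * Real.exp (-x * t) * besselK ν (p / (t * (1 - t))))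
        / (Real.sqrt Real.pi * p ^ (a / 2 + 1/4) * x ^ (-a / 2 - 3/4)
            * Real.exp (-p - 2 * Real.sqrt (p * x))))
      atTop (nhds 1) := by
  obtain ⟨C, hC⟩ := exists_abs_whittakerAmplitude_le hp ν b
  have saddle := (tendsto_inv_smul_integral_rpow_mul_exp_neg_mul_sub_div_smul hp a
    (measurable_whittakerAmplitude p ν b).stronglyMeasurable (fun t _ ↦ hC t)
    (tendsto_whittakerAmplitude_nhdsGT_zero hp ν b)).const_mul (√2 / √π * exp p / √π)
  have constant : √2 / √π * exp p / √π * √π • (exp (-p) * √(π / 2)) = 1 := by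
    rw [sqrt_div pi_nonneg, exp_neg, smul_eq_mul]
    field_simp
  rw [constant] at saddle
  refine saddle.congr fun x ↦ ?_
  have prefactor : √(2 * p / π) = √2 / √π * √p := by
    rw [sqrt_div (by positivity), sqrt_mul zero_le_two]
    ring
  have decay : exp (-p - 2 * √(p * x)) = (exp p)⁻¹ * exp (-2 * √(p * x)) := by
    rw [← exp_neg, ← exp_add]
    ring_nf
  rw [prefactor, mul_assoc (√2 / √π), sqrt_mul_integral_besselK_eq hp, decay, smul_eq_mul]
  field_simp

/-- Leading asymptotics, as `x → +∞`, of
`I(a,b;-x) = √(2p/π) ∫₀^1 t^(a-1/2)(1-t)^(b-1/2) e^{-xt} K_ν(p/(t(1-t))) dt`: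
`I(a,b;-x) ~ √π p^{a/2+1/4} x^{-a/2-3/4} exp(-p - 2√(px))`. -/
theorem extended_whittaker_asymptotics (p : ℝ) (hp : 0 < p) (ν : ℝ) (hν : -1/2 ≤ ν)
    (a b : ℝ) :
    Tendsto (fun x : ℝ =>
      (Real.sqrt (2 * p / Real.pi)
          * ∫ t in Ioo (0 : ℝ) 1, t ^ (a - 1/2) * (1 - t) ^ (b - 1/2)
              * Real.exp (-x * t) * besselK ν (p / (t * (1 - t))))
        / (Real.sqrt Real.pi * p ^ (a / 2 + 1/4) * x ^ (-a / 2 - 3/4)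
            * Real.exp (-p - 2 * Real.sqrt (p * x))))
      atTop (nhds 1) :=
  extended_whittaker_asymptotics_general p hp ν a b
end
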